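/- arXiv:math/0610877 — 5 statements merged into one kernel-verified Lean document; each statement's English description precedes it below -/
import Mathlib

section
/- Let P : V ⇉ W and Q : W ⇉ Y be linear relations between finite-dimensional complex vector spaces such that Ker Q ∩ Indef P = 0 and Im P + Dom Q = W. Then dim(Q∘P) = dim P + dim Q − dim W. (Proposition 4.1(a).) -/
open Submodule Module

/-- The kernel of a linear relation `P : V ⇉ W`: all `v` with `(v, 0) ∈ P`. -/
def relKer {V W : Type*} [AddCommGroup V] [Module ℂ V] [AddCommGroup W] [Module ℂ W]
    (P : Submodule ℂ (V × W)) : Submodule ℂ V :=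
  P.comap (LinearMap.inl ℂ V W)

/-- The indefiniteness of a linear relation `P : V ⇉ W`: all `w` with `(0, w) ∈ P`. -/
def relIndef {V W : Type*} [AddCommGroup V] [Module ℂ V] [AddCommGroup W] [Module ℂ W]
    (P : Submodule ℂ (V × W)) : Submodule ℂ W :=
  P.comap (LinearMap.inr ℂ V W)

/-- The domain of a linear relation `P : V ⇉ W`. -/
def relDom {V W : Type*} [AddCommGroup V] [Module ℂ V] [AddCommGroup W] [Module ℂ W]
    (P : Submodule ℂ (V × W)) : Submodule ℂ V :=
  P.map (LinearMap.fst ℂ V W)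

/-- The image of a linear relation `P : V ⇉ W`. -/
def relIm {V W : Type*} [AddCommGroup V] [Module ℂ V] [AddCommGroup W] [Module ℂ W]
    (P : Submodule ℂ (V × W)) : Submodule ℂ W :=
  P.map (LinearMap.snd ℂ V W)

/-- The composition `Q∘P : V ⇉ Y` of linear relations `P : V ⇉ W` and `Q : W ⇉ Y`. -/
def relComp {V W Y : Type*} [AddCommGroup V] [Module ℂ V] [AddCommGroup W] [Module ℂ W]
    [AddCommGroup Y] [Module ℂ Y]
    (P : Submodule ℂ (V × W)) (Q : Submodule ℂ (W × Y)) : Submodule ℂ (V × Y) where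
  carrier := {p | ∃ w : W, (p.1, w) ∈ P ∧ (w, p.2) ∈ Q}
  add_mem' := by
    rintro ⟨a, b⟩ ⟨c, d⟩ ⟨w₁, h₁, h₂⟩ ⟨w₂, h₃, h₄⟩
    exact ⟨w₁ + w₂, P.add_mem h₁ h₃, Q.add_mem h₂ h₄⟩
  zero_mem' := ⟨0, P.zero_mem, Q.zero_mem⟩
  smul_mem' := by
    rintro c ⟨a, b⟩ ⟨w, h₁, h₂⟩
    exact ⟨c • w, P.smul_mem c h₁, Q.smul_mem c h₂⟩

/-!
The difference map `((v, w), (w', y)) ↦ w - w'` from `P × Q` to `W` has image `Im P + Dom Q`, and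
its kernel, the space of composable pairs, projects onto `Q ∘ P` with fibre `Ker Q ∩ Indef P`.
Rank-nullity for these two maps expresses `dim P + dim Q` through the three spaces `Im P + Dom Q`,
`Ker Q ∩ Indef P` and `Q ∘ P`.
-/

universe u v w

-- `rank_prod` lifts the two ranks to `max v w` and `max u v`; here the lifts are the smallest ones.
theorem rank_prod_max {R : Type*} {M : Type (max u v)} {N : Type (max v w)} [Ring R]
    [StrongRankCondition R] [AddCommGroup M] [Module R M] [Module.Free R M]
    [AddCommGroup N] [Module R N] [Module.Free R N] :
    Module.rank R (M × N) =
      Cardinal.lift.{w} (Module.rank R M) + Cardinal.lift.{u} (Module.rank R N) := by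
  rw [rank_prod, ← Cardinal.lift_umax.{max u v, max v w}, ← Cardinal.lift_umax.{max v w, max u v},
    Cardinal.lift_umax.{max u v, w}, Cardinal.lift_umax.{max v w, u}]

section RelComp

variable {V : Type u} {W : Type v} {Y : Type w} [AddCommGroup V] [Module ℂ V]
  [AddCommGroup W] [Module ℂ W] [AddCommGroup Y] [Module ℂ Y]
  (P : Submodule ℂ (V × W)) (Q : Submodule ℂ (W × Y))

/-- The difference map `((v, w), (w', y)) ↦ w - w'`, whose kernel consists of the composable pairs
of elements of `P` and `Q`. It is written as a `coprod` so that its range is a supremum. -/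
def relDiff : P × Q →ₗ[ℂ] W :=
  (LinearMap.snd ℂ V W ∘ₗ P.subtype).coprod (-(LinearMap.fst ℂ W Y ∘ₗ Q.subtype))

/-- The projection `((v, w), (w, y)) ↦ (v, y)` of composable pairs to their endpoints. -/
def relEndpoints : LinearMap.ker (relDiff P Q) →ₗ[ℂ] V × Y :=
  (LinearMap.fst ℂ V W ∘ₗ P.subtype).prodMap (LinearMap.snd ℂ W Y ∘ₗ Q.subtype) ∘ₗ
    (LinearMap.ker (relDiff P Q)).subtype

variable {P Q}

theorem mem_ker_relDiff {x : P × Q} : x ∈ LinearMap.ker (relDiff P Q) ↔ x.1.1.2 = x.2.1.1 :=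
  add_neg_eq_zero

theorem mem_ker_relEndpoints {x : LinearMap.ker (relDiff P Q)} :
    x ∈ LinearMap.ker (relEndpoints P Q) ↔ x.1.1.1.1 = 0 ∧ x.1.2.1.2 = 0 :=
  Prod.mk_eq_zero

variable (P Q)

theorem range_relDiff : LinearMap.range (relDiff P Q) = relIm P ⊔ relDom Q := by
  simp only [relDiff, relIm, relDom, LinearMap.range_coprod, LinearMap.range_neg,
    LinearMap.range_comp, range_subtype]

theorem range_relEndpoints : LinearMap.range (relEndpoints P Q) = relComp P Q := by
  ext ⟨v, y⟩
  constructor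
  · rintro ⟨⟨⟨⟨⟨v, w⟩, hP⟩, ⟨⟨w', y⟩, hQ⟩⟩, hx⟩, ⟨⟩⟩
    obtain rfl : w = w' := mem_ker_relDiff.1 hx
    exact ⟨w, hP, hQ⟩
  · rintro ⟨w, hP, hQ⟩
    exact ⟨⟨(⟨(v, w), hP⟩, ⟨(w, y), hQ⟩), mem_ker_relDiff.2 rfl⟩, rfl⟩

/-- The fibre of `relEndpoints` over zero: `w ∈ Ker Q ∩ Indef P` corresponds to the composable pair
`((0, w), (w, 0))`. -/
def kerInfIndefEquivKerRelEndpoints :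
    ↥(relKer Q ⊓ relIndef P) ≃ₗ[ℂ] LinearMap.ker (relEndpoints P Q) where
  toFun w := ⟨⟨(⟨(0, w), w.2.2⟩, ⟨(w, 0), w.2.1⟩), mem_ker_relDiff.2 rfl⟩, rfl⟩
  map_add' _ _ := by ext <;> simp
  map_smul' _ _ := by ext <;> simp
  invFun x := ⟨x.1.1.1.1.2, by
    obtain ⟨⟨⟨⟨⟨v, w⟩, hP⟩, ⟨⟨w', y⟩, hQ⟩⟩, hx⟩, h0⟩ := x
    obtain rfl : w = w' := mem_ker_relDiff.1 hx
    obtain ⟨rfl, rfl⟩ : v = 0 ∧ y = 0 := mem_ker_relEndpoints.1 h0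
    exact ⟨hQ, hP⟩⟩
  left_inv _ := rfl
  right_inv := by
    rintro ⟨⟨⟨⟨⟨v, w⟩, hP⟩, ⟨⟨w', y⟩, hQ⟩⟩, hx⟩, h0⟩
    obtain rfl : w = w' := mem_ker_relDiff.1 hx
    obtain ⟨rfl, rfl⟩ : v = 0 ∧ y = 0 := mem_ker_relEndpoints.1 h0
    rfl

theorem lift_rank_ker_relDiff :
    Cardinal.lift.{v} (Module.rank ℂ (relComp P Q)) +
        Cardinal.lift.{max u w} (Module.rank ℂ ↥(relKer Q ⊓ relIndef P)) =
      Module.rank ℂ (LinearMap.ker (relDiff P Q)) := by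
  have rank_nullity := LinearMap.lift_rank_range_add_rank_ker (R := ℂ)
    (M := LinearMap.ker (relDiff P Q)) (relEndpoints P Q)
  have rank_ker := (kerInfIndefEquivKerRelEndpoints P Q).lift_rank_eq
  rw [range_relEndpoints, Cardinal.lift_id'.{max u w, max u v w},
    Cardinal.lift_id'.{max u w, max u v w}, Cardinal.lift_umax.{max u w, v}] at rank_nullity
  rw [Cardinal.lift_id'.{v, max u v w}, Cardinal.lift_umax.{v, max u w}] at rank_ker
  rw [rank_ker, rank_nullity]

theorem dim_relComp_general :
    Cardinal.lift.{v} (Module.rank ℂ (relComp P Q)) +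
        Cardinal.lift.{max u w} (Module.rank ℂ ↥(relKer Q ⊓ relIndef P)) +
        Cardinal.lift.{max u w} (Module.rank ℂ ↥(relIm P ⊔ relDom Q)) =
      Cardinal.lift.{w} (Module.rank ℂ P) + Cardinal.lift.{u} (Module.rank ℂ Q) := by
  have rank_nullity := (relDiff P Q).lift_rank_range_add_rank_ker
  rw [range_relDiff, Cardinal.lift_id'.{v, max u v w}, Cardinal.lift_id'.{v, max u v w},
    Cardinal.lift_umax.{v, max u w}] at rank_nullity
  rw [lift_rank_ker_relDiff, add_comm, rank_nullity, rank_prod_max.{u, v, w}]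

end RelComp

/-- **Proposition 4.1(a).** If `P : V ⇉ W` and `Q : W ⇉ Y` are linear relations between
finite-dimensional complex vector spaces with `Ker Q ∩ Indef P = 0` and `Im P + Dom Q = W`,
then `dim (Q∘P) = dim P + dim Q - dim W`. -/
theorem dim_relComp {V W Y : Type*}
    [AddCommGroup V] [Module ℂ V] [FiniteDimensional ℂ V]
    [AddCommGroup W] [Module ℂ W] [FiniteDimensional ℂ W]
    [AddCommGroup Y] [Module ℂ Y] [FiniteDimensional ℂ Y]
    (P : Submodule ℂ (V × W)) (Q : Submodule ℂ (W × Y))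
    (hker : relKer Q ⊓ relIndef P = ⊥)
    (hdom : relIm P ⊔ relDom Q = ⊤) :
    Module.finrank ℂ (relComp P Q) + Module.finrank ℂ W
      = Module.finrank ℂ P + Module.finrank ℂ Q := by
  have dim_formula := hdom ▸ hker ▸ dim_relComp_general P Q
  simpa [← finrank_eq_rank, ← Nat.cast_add] using dim_formula
end

section
/- Let P ≤ V × W and Q ≤ W × Y be maximal isotropic subspaces for the difference forms, and suppose Ker Q ∩ Indef P = 0. Then the composition Q∘P is a maximal isotropic subspace of V × Y: it is isotropic for the form ⟨(v,y),(v′,y′)⟩ = B_V(v,v′) − B_Y(y,y′) and has dimension (dim V + dim Y)/2. (Proposition 4.2: multiplication of morphisms in the Cayley–Klein category CK GD is well defined.) -/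
open Submodule Module

/-- The difference form `⟨(v,w),(v',w')⟩ = B_V(v,v') - B_W(w,w')` on `V × W`. -/
noncomputable def diffForm {V W : Type*} [AddCommGroup V] [Module ℂ V]
    [AddCommGroup W] [Module ℂ W]
    (BV : LinearMap.BilinForm ℂ V) (BW : LinearMap.BilinForm ℂ W) :
    LinearMap.BilinForm ℂ (V × W) :=
  LinearMap.mk₂ ℂ (fun p q => BV p.1 q.1 - BW p.2 q.2)
    (by intro p p' q; simp; ring)
    (by intro c p q; simp; ring)
    (by intro p q q'; simp; ring)
    (by intro c p q; simp; ring)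

/-- A subspace is isotropic for a bilinear form if the form vanishes identically on it. -/
def IsIsotropic {V : Type*} [AddCommGroup V] [Module ℂ V]
    (B : LinearMap.BilinForm ℂ V) (P : Submodule ℂ V) : Prop :=
  ∀ x ∈ P, ∀ y ∈ P, B x y = 0

/-!
If `P` and `Q` are maximal isotropic, they equal their own orthogonals for the difference forms, so
`(Im P)ᗮ = Indef P` and `(Dom Q)ᗮ = Ker Q`. The hypothesis `Ker Q ∩ Indef P = 0` therefore says
that `(Im P + Dom Q)ᗮ = 0`, that is, `Im P + Dom Q = W`. Hence the map `P × Q → W`,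
`((v, w), (w', y)) ↦ w - w'`, is onto, and its kernel, which projects onto `Q ∘ P` with fibre
`Ker Q ∩ Indef P = 0`, has dimension `dim P + dim Q - dim W`.
-/

section Finrank

variable {K V W : Type*} [DivisionRing K] [AddCommGroup V] [Module K V]
  [AddCommGroup W] [Module K W]

theorem finrank_map_add_finrank_inf_ker (f : V →ₗ[K] W) (p : Submodule K V)
    [FiniteDimensional K p] :
    finrank K (p.map f) + finrank K ↥(p ⊓ f.ker) = finrank K p := by
  rw [← LinearMap.range_domRestrict, ← LinearMap.finrank_range_add_finrank_ker (f.domRestrict p),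
    LinearMap.ker_domRestrict, ← finrank_map_subtype_eq p, map_comap_subtype]

theorem finrank_submodule_prod (p : Submodule K V) (q : Submodule K W) [FiniteDimensional K p]
    [FiniteDimensional K q] : finrank K (p.prod q) = finrank K p + finrank K q := by
  have hrange : p.prod q = (p.subtype.prodMap q.subtype).range := by
    rw [LinearMap.range_prodMap, range_subtype, range_subtype]
  have hinj : Function.Injective (p.subtype.prodMap q.subtype) :=
    p.injective_subtype.prodMap q.injective_subtype
  rw [hrange, LinearMap.finrank_range_of_inj hinj, Module.finrank_prod]

end Finrank

section MaximalIsotropic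

variable {K V : Type*} [Field K] [AddCommGroup V] [Module K V] [FiniteDimensional K V]
  {B : LinearMap.BilinForm K V}

theorem eq_top_of_orthogonal_eq_bot {p : Submodule K V} (h : B.orthogonal p = ⊥) : p = ⊤ := by
  have hfinrank := LinearMap.BilinForm.finrank_add_finrank_orthogonal' (B := B) p
  rw [h, finrank_bot] at hfinrank
  exact eq_top_of_finrank_eq (le_antisymm p.finrank_le (by lia))

/-- Maximal isotropic subspaces for `B`. Maximality means half the dimension of `V`, not maximality
for inclusion. -/
structure IsMaximalIsotropic {K V : Type*} [Field K] [AddCommGroup V] [Module K V]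
    (B : LinearMap.BilinForm K V) (L : Submodule K V) : Prop where
  isotropic : ∀ x ∈ L, ∀ y ∈ L, B x y = 0
  two_mul_finrank : 2 * finrank K L = finrank K V

theorem IsMaximalIsotropic.orthogonal_eq {L : Submodule K V} (hL : IsMaximalIsotropic B L)
    (hB : B.Nondegenerate) : B.orthogonal L = L := by
  have hle : L ≤ B.orthogonal L := fun y hy x hx => hL.isotropic x hx y hy
  have horthogonal := LinearMap.BilinForm.finrank_orthogonal hB L
  have hhalf := hL.two_mul_finrank
  exact (eq_of_le_of_finrank_eq hle (by lia)).symm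

end MaximalIsotropic

section DifferenceForm

variable {R V W : Type*} [CommRing R] [AddCommGroup V] [Module R V] [AddCommGroup W] [Module R W]

/-- The difference form `⟨(v, w), (v', w')⟩ = BV v v' - BW w w'` on `V × W`, over an arbitrary
commutative ring; it is `diffForm` over `ℂ`. -/
def differenceForm (BV : LinearMap.BilinForm R V) (BW : LinearMap.BilinForm R W) :
    LinearMap.BilinForm R (V × W) :=
  BV.compl₁₂ (LinearMap.fst R V W) (LinearMap.fst R V W) -
    BW.compl₁₂ (LinearMap.snd R V W) (LinearMap.snd R V W)

@[simp]
theorem differenceForm_apply (BV : LinearMap.BilinForm R V) (BW : LinearMap.BilinForm R W)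
    (p q : V × W) : differenceForm BV BW p q = BV p.1 q.1 - BW p.2 q.2 :=
  rfl

theorem differenceForm_nondegenerate {BV : LinearMap.BilinForm R V}
    {BW : LinearMap.BilinForm R W} (hV : BV.Nondegenerate) (hW : BW.Nondegenerate) :
    (differenceForm BV BW).Nondegenerate := by
  constructor
  · rintro ⟨v, w⟩ h
    exact Prod.ext (hV.1 v fun v' => by simpa using h (v', 0))
      (hW.1 w fun w' => by simpa using h (0, w'))
  · rintro ⟨v, w⟩ h
    exact Prod.ext (hV.2 v fun v' => by simpa using h (v', 0))
      (hW.2 w fun w' => by simpa using h (0, w'))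

end DifferenceForm

/-- Linear relations `V ⇉ W` over an arbitrary ring, encoded by their graphs. -/
abbrev LinearRelation (R V W : Type*) [Ring R] [AddCommGroup V] [Module R V]
    [AddCommGroup W] [Module R W] : Type _ :=
  Submodule R (V × W)

namespace LinearRelation

section Composition

variable {R V W Y : Type*} [Ring R] [AddCommGroup V] [Module R V] [AddCommGroup W] [Module R W]
  [AddCommGroup Y] [Module R Y]

/-- The kernel of a linear relation; it is `relKer` over `ℂ`. -/
def ker (P : LinearRelation R V W) : Submodule R V :=
  P.comap (LinearMap.inl R V W)

/-- The indefiniteness of a linear relation; it is `relIndef` over `ℂ`. -/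
def indef (P : LinearRelation R V W) : Submodule R W :=
  P.comap (LinearMap.inr R V W)

/-- The domain of a linear relation. -/
def dom (P : LinearRelation R V W) : Submodule R V :=
  P.map (LinearMap.fst R V W)

/-- The image of a linear relation. -/
def im (P : LinearRelation R V W) : Submodule R W :=
  P.map (LinearMap.snd R V W)

/-- The composition `Q ∘ P` of linear relations; it is `relComp` over `ℂ`. -/
def comp (P : LinearRelation R V W) (Q : LinearRelation R W Y) : LinearRelation R V Y where
  carrier := {p | ∃ w : W, (p.1, w) ∈ P ∧ (w, p.2) ∈ Q}
  add_mem' := by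
    rintro _ _ ⟨w, hP, hQ⟩ ⟨w', hP', hQ'⟩
    exact ⟨w + w', P.add_mem hP hP', Q.add_mem hQ hQ'⟩
  zero_mem' := ⟨0, P.zero_mem, Q.zero_mem⟩
  smul_mem' := by
    rintro c _ ⟨w, hP, hQ⟩
    exact ⟨c • w, P.smul_mem c hP, Q.smul_mem c hQ⟩

variable (R V W Y) in
/-- The discrepancy `w - w'` of a pair `((v, w), (w', y))`, zero exactly when the pair can be
composed. -/
def middleDifference : (V × W) × (W × Y) →ₗ[R] W :=
  (LinearMap.snd R V W).coprod (-LinearMap.fst R W Y)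

variable (R V W Y) in
/-- The outer entries `(v, y)` of a pair `((v, w), (w', y))`. -/
def outerEntries : (V × W) × (W × Y) →ₗ[R] V × Y :=
  (LinearMap.fst R V W).prodMap (LinearMap.snd R W Y)

/-- The pairs `((v, w), (w, y))` with `(v, w) ∈ P` and `(w, y) ∈ Q`, that is, the fibre product of
`P` and `Q` over `W`. -/
def composablePairs (P : LinearRelation R V W) (Q : LinearRelation R W Y) :
    Submodule R ((V × W) × (W × Y)) :=
  P.prod Q ⊓ (middleDifference R V W Y).ker

theorem mem_composablePairs {P : LinearRelation R V W} {Q : LinearRelation R W Y} {v : V}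
    {w w' : W} {y : Y} :
    ((v, w), (w', y)) ∈ composablePairs P Q ↔ ((v, w) ∈ P ∧ (w', y) ∈ Q) ∧ w = w' := by
  simp [composablePairs, middleDifference, ← sub_eq_add_neg, sub_eq_zero]

theorem map_middleDifference_prod (P : LinearRelation R V W) (Q : LinearRelation R W Y) :
    (P.prod Q).map (middleDifference R V W Y) = P.im ⊔ Q.dom := by
  rw [middleDifference, LinearMap.map_coprod_prod, Submodule.map_neg, im, dom]

theorem map_outerEntries_composablePairs (P : LinearRelation R V W) (Q : LinearRelation R W Y) :
    (composablePairs P Q).map (outerEntries R V W Y) = P.comp Q := by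
  ext ⟨v, y⟩
  constructor
  · rintro ⟨⟨⟨v, w⟩, ⟨w', y⟩⟩, hpair, ⟨⟩⟩
    obtain ⟨⟨hP, hQ⟩, rfl⟩ := mem_composablePairs.1 hpair
    exact ⟨w, hP, hQ⟩
  · rintro ⟨w, hP, hQ⟩
    exact ⟨((v, w), (w, y)), mem_composablePairs.2 ⟨⟨hP, hQ⟩, rfl⟩, rfl⟩

theorem composablePairs_inf_ker_outerEntries (P : LinearRelation R V W)
    (Q : LinearRelation R W Y) :
    composablePairs P Q ⊓ (outerEntries R V W Y).ker =
      (Q.ker ⊓ P.indef).map ((LinearMap.inr R V W).prod (LinearMap.inl R W Y)) := by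
  ext ⟨⟨v, w⟩, ⟨w', y⟩⟩
  constructor
  · rintro ⟨hpair, houter⟩
    obtain ⟨⟨hP, hQ⟩, rfl⟩ := mem_composablePairs.1 hpair
    obtain ⟨rfl, rfl⟩ : v = 0 ∧ y = 0 := Prod.mk_eq_zero.1 houter
    exact ⟨w, ⟨hQ, hP⟩, rfl⟩
  · rintro ⟨w, ⟨hQ, hP⟩, ⟨⟩⟩
    exact ⟨mem_composablePairs.2 ⟨⟨hP, hQ⟩, rfl⟩, rfl⟩

end Composition

section Finrank

variable {K V W Y : Type*} [DivisionRing K] [AddCommGroup V] [Module K V]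
  [AddCommGroup W] [Module K W] [AddCommGroup Y] [Module K Y]

theorem finrank_comp_add_finrank_ker_inf_indef_add_finrank_im_sup_dom (P : LinearRelation K V W)
    (Q : LinearRelation K W Y) [FiniteDimensional K P] [FiniteDimensional K Q] :
    finrank K (P.comp Q) + finrank K ↥(Q.ker ⊓ P.indef) + finrank K ↥(P.im ⊔ Q.dom) =
      finrank K P + finrank K Q := by
  have : FiniteDimensional K (P.prod Q) :=
    Module.Finite.iff_fg.2 ((Module.Finite.iff_fg.1 ‹_›).prod (Module.Finite.iff_fg.1 ‹_›))
  have : FiniteDimensional K (composablePairs P Q) := finiteDimensional_of_le inf_le_left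
  have hinj : Function.Injective ((LinearMap.inr K V W).prod (LinearMap.inl K W Y)) :=
    fun w w' h => congrArg (fun p => p.1.2) h
  have houter := finrank_map_add_finrank_inf_ker (outerEntries K V W Y) (composablePairs P Q)
  rw [map_outerEntries_composablePairs, composablePairs_inf_ker_outerEntries,
    ← (equivMapOfInjective _ hinj _).finrank_eq] at houter
  have hmiddle := finrank_map_add_finrank_inf_ker (middleDifference K V W Y) (P.prod Q)
  rw [map_middleDifference_prod, finrank_submodule_prod, ← composablePairs] at hmiddle
  lia

end Finrank

section DifferenceForm

variable {R V W Y : Type*} [CommRing R] [AddCommGroup V] [Module R V]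
  [AddCommGroup W] [Module R W] [AddCommGroup Y] [Module R Y]

theorem comp_isotropic {BV : LinearMap.BilinForm R V} {BW : LinearMap.BilinForm R W}
    {BY : LinearMap.BilinForm R Y} {P : LinearRelation R V W} {Q : LinearRelation R W Y}
    (hP : ∀ p ∈ P, ∀ p' ∈ P, differenceForm BV BW p p' = 0)
    (hQ : ∀ q ∈ Q, ∀ q' ∈ Q, differenceForm BW BY q q' = 0) :
    ∀ r ∈ P.comp Q, ∀ r' ∈ P.comp Q, differenceForm BV BY r r' = 0 := by
  rintro ⟨v, y⟩ ⟨w, hvw, hwy⟩ ⟨v', y'⟩ ⟨w', hvw', hwy'⟩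
  have hVW : BV v v' = BW w w' := sub_eq_zero.1 (hP _ hvw _ hvw')
  have hWY : BW w w' = BY y y' := sub_eq_zero.1 (hQ _ hwy _ hwy')
  exact sub_eq_zero.2 (hVW.trans hWY)

theorem orthogonal_im (BV : LinearMap.BilinForm R V) (BW : LinearMap.BilinForm R W)
    (P : LinearRelation R V W) :
    BW.orthogonal P.im = indef ((differenceForm BV BW).orthogonal P) := by
  ext z
  simpa [im, indef, LinearMap.BilinForm.mem_orthogonal_iff] using forall_comm

theorem orthogonal_dom (BW : LinearMap.BilinForm R W) (BY : LinearMap.BilinForm R Y)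
    (Q : LinearRelation R W Y) :
    BW.orthogonal Q.dom = ker ((differenceForm BW BY).orthogonal Q) := by
  ext z
  simp [dom, ker, LinearMap.BilinForm.mem_orthogonal_iff]

end DifferenceForm

theorem im_sup_dom_eq_top {K V W Y : Type*} [Field K]
    [AddCommGroup V] [Module K V] [FiniteDimensional K V]
    [AddCommGroup W] [Module K W] [FiniteDimensional K W]
    [AddCommGroup Y] [Module K Y] [FiniteDimensional K Y]
    {BV : LinearMap.BilinForm K V} {BW : LinearMap.BilinForm K W} {BY : LinearMap.BilinForm K Y}
    (hV : BV.Nondegenerate) (hW : BW.Nondegenerate) (hY : BY.Nondegenerate)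
    {P : LinearRelation K V W} {Q : LinearRelation K W Y}
    (hP : IsMaximalIsotropic (differenceForm BV BW) P)
    (hQ : IsMaximalIsotropic (differenceForm BW BY) Q) (hker : Q.ker ⊓ P.indef = ⊥) :
    P.im ⊔ Q.dom = ⊤ := by
  have him : BW.orthogonal P.im = P.indef := by
    rw [orthogonal_im BV, hP.orthogonal_eq (differenceForm_nondegenerate hV hW)]
  have hdom : BW.orthogonal Q.dom = Q.ker := by
    rw [orthogonal_dom BW BY, hQ.orthogonal_eq (differenceForm_nondegenerate hW hY)]
  refine eq_top_of_orthogonal_eq_bot (B := BW) (eq_bot_iff.2 ?_)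
  calc BW.orthogonal (P.im ⊔ Q.dom)
      ≤ BW.orthogonal Q.dom ⊓ BW.orthogonal P.im :=
        le_inf (LinearMap.BilinForm.orthogonal_le le_sup_right)
          (LinearMap.BilinForm.orthogonal_le le_sup_left)
    _ = ⊥ := by rw [hdom, him, hker]

end LinearRelation

theorem relComp_maximal_isotropic_general {K V W Y : Type*} [Field K]
    [AddCommGroup V] [Module K V] [FiniteDimensional K V]
    [AddCommGroup W] [Module K W] [FiniteDimensional K W]
    [AddCommGroup Y] [Module K Y] [FiniteDimensional K Y]
    {BV : LinearMap.BilinForm K V} {BW : LinearMap.BilinForm K W} {BY : LinearMap.BilinForm K Y}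
    (hV : BV.Nondegenerate) (hW : BW.Nondegenerate) (hY : BY.Nondegenerate)
    {P : LinearRelation K V W} {Q : LinearRelation K W Y}
    (hP : IsMaximalIsotropic (differenceForm BV BW) P)
    (hQ : IsMaximalIsotropic (differenceForm BW BY) Q) (hker : Q.ker ⊓ P.indef = ⊥) :
    IsMaximalIsotropic (differenceForm BV BY) (P.comp Q) where
  isotropic := LinearRelation.comp_isotropic hP.isotropic hQ.isotropic
  two_mul_finrank := by
    have hdim :=
      LinearRelation.finrank_comp_add_finrank_ker_inf_indef_add_finrank_im_sup_dom P Q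
    rw [hker, LinearRelation.im_sup_dom_eq_top hV hW hY hP hQ hker, finrank_bot, finrank_top]
      at hdim
    have hPdim := hP.two_mul_finrank
    have hQdim := hQ.two_mul_finrank
    rw [finrank_prod] at hPdim hQdim ⊢
    lia

/-- **Proposition 4.2** (composition of morphisms in the Cayley–Klein category CK GD is
well defined). Let `V`, `W`, `Y` be even-dimensional finite-dimensional complex vector
spaces carrying nondegenerate symmetric bilinear forms, and let `P ≤ V × W`, `Q ≤ W × Y`
be maximal isotropic subspaces for the difference forms with `Ker Q ∩ Indef P = 0`.
Then `Q∘P` is a maximal isotropic subspace of `V × Y` for the difference form: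
it is isotropic and has dimension `(dim V + dim Y)/2`. -/
theorem relComp_maximal_isotropic {V W Y : Type*}
    [AddCommGroup V] [Module ℂ V] [FiniteDimensional ℂ V]
    [AddCommGroup W] [Module ℂ W] [FiniteDimensional ℂ W]
    [AddCommGroup Y] [Module ℂ Y] [FiniteDimensional ℂ Y]
    (BV : LinearMap.BilinForm ℂ V) (BW : LinearMap.BilinForm ℂ W)
    (BY : LinearMap.BilinForm ℂ Y)
    (hVs : BV.IsSymm) (hWs : BW.IsSymm) (hYs : BY.IsSymm)
    (hVn : BV.Nondegenerate) (hWn : BW.Nondegenerate) (hYn : BY.Nondegenerate)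
    (hVe : Even (Module.finrank ℂ V)) (hWe : Even (Module.finrank ℂ W))
    (hYe : Even (Module.finrank ℂ Y))
    (P : Submodule ℂ (V × W)) (Q : Submodule ℂ (W × Y))
    (hPiso : IsIsotropic (diffForm BV BW) P)
    (hPmax : 2 * Module.finrank ℂ P = Module.finrank ℂ V + Module.finrank ℂ W)
    (hQiso : IsIsotropic (diffForm BW BY) Q)
    (hQmax : 2 * Module.finrank ℂ Q = Module.finrank ℂ W + Module.finrank ℂ Y)
    (hker : relKer Q ⊓ relIndef P = ⊥) :
    IsIsotropic (diffForm BV BY) (relComp P Q) ∧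
      2 * Module.finrank ℂ (relComp P Q) = Module.finrank ℂ V + Module.finrank ℂ Y := by
  have hcomp := relComp_maximal_isotropic_general hVn hWn hYn
    ⟨hPiso, hPmax.trans finrank_prod.symm⟩ ⟨hQiso, hQmax.trans finrank_prod.symm⟩ hker
  exact ⟨hcomp.isotropic, hcomp.two_mul_finrank.trans finrank_prod⟩
end

section
/- Let P : V ⇉ W and Q : W ⇉ Y be linear relations between finite-dimensional complex vector spaces. Then the pair (P,Q) is composable if and only if the pair of dual relations (P′,Q′) is composable; explicitly, [Ker Q ∩ Indef P = 0 and Im P + Dom Q = W] holds if and only if [Ker Q′ ∩ Indef P′ = 0 and Im P′ + Dom Q′ = W*]. (Lemma 4.2(d): Q′P′ = null if and only if QP = null.) -/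
open Submodule Module

/-- The dual relation `P' : V* ⇉ W*` of a linear relation `P : V ⇉ W`. -/
def relDual {V W : Type*} [AddCommGroup V] [Module ℂ V] [AddCommGroup W] [Module ℂ W]
    (P : Submodule ℂ (V × W)) : Submodule ℂ (Module.Dual ℂ V × Module.Dual ℂ W) where
  carrier := {fg | ∀ p ∈ P, fg.1 p.1 = fg.2 p.2}
  add_mem' := by
    rintro ⟨f, g⟩ ⟨f', g'⟩ h h' ⟨v, w⟩ hp
    simpa using congrArg₂ (· + ·) (h _ hp) (h' _ hp)
  zero_mem' := by intro p _; simp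
  smul_mem' := by
    rintro c ⟨f, g⟩ h ⟨v, w⟩ hp
    simpa using congrArg (c * ·) (h _ hp)

/-- The pair `(P, Q)` of linear relations `P : V ⇉ W`, `Q : W ⇉ Y` is composable if
`Ker Q ∩ Indef P = 0` and `Im P + Dom Q = W`. -/
def Composable {V W Y : Type*} [AddCommGroup V] [Module ℂ V] [AddCommGroup W] [Module ℂ W]
    [AddCommGroup Y] [Module ℂ Y]
    (P : Submodule ℂ (V × W)) (Q : Submodule ℂ (W × Y)) : Prop :=
  relKer Q ⊓ relIndef P = ⊥ ∧ relIm P ⊔ relDom Q = ⊤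

/-!
Annihilators exchange the four subspaces attached to a relation with those of its dual:
`Ker P′ = (Dom P)⁰`, `Indef P′ = (Im P)⁰`, `Dom P′ = (Ker P)⁰`, `Im P′ = (Indef P)⁰`.
Since `U ↦ U⁰` is injective and turns sums into intersections and intersections into sums, each of
the two conditions defining composability of `(P, Q)` is equivalent to the other one for `(P′, Q′)`.
The last two identities rest on extending functionals from a subspace, which is what makes
annihilators commute with preimages.
-/

theorem dualAnnihilator_comap {K E F : Type*} [Field K] [AddCommGroup E] [Module K E]
    [AddCommGroup F] [Module K F] (f : E →ₗ[K] F) (U : Submodule K F) :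
    (U.comap f).dualAnnihilator = U.dualAnnihilator.map f.dualMap := by
  have comap_eq_ker : U.comap f = LinearMap.ker (U.mkQ ∘ₗ f) := by
    rw [LinearMap.ker_comp, ker_mkQ]
  rw [comap_eq_ker, ← LinearMap.range_dualMap_eq_dualAnnihilator_ker,
    ← LinearMap.dualMap_comp_dualMap, LinearMap.range_comp, range_dualMap_mkQ_eq]

section

variable {V W Y : Type*} [AddCommGroup V] [Module ℂ V] [AddCommGroup W] [Module ℂ W]
  [AddCommGroup Y] [Module ℂ Y]

theorem relKer_relDual (P : Submodule ℂ (V × W)) :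
    relKer (relDual P) = (relDom P).dualAnnihilator := by
  ext f
  simp [relKer, relDual, relDom]

theorem relIndef_relDual (P : Submodule ℂ (V × W)) :
    relIndef (relDual P) = (relIm P).dualAnnihilator := by
  ext g
  simpa [relIndef, relDual, relIm, eq_comm] using forall_comm

/-- The sign appears because `f v = g w` on `P` means that `(v, w) ↦ f v - g w` annihilates `P`. -/
theorem relDual_eq_map_dualAnnihilator (P : Submodule ℂ (V × W)) :
    relDual P = P.dualAnnihilator.map
      ((LinearMap.inl ℂ V W).dualMap.prod (-(LinearMap.inr ℂ V W).dualMap)) := by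
  ext ⟨f, g⟩
  constructor
  · intro hfg
    refine ⟨f.coprod (-g), ?_, by ext <;> simp⟩
    rw [SetLike.mem_coe, mem_dualAnnihilator]
    intro p hp
    simpa [← sub_eq_add_neg, sub_eq_zero] using hfg p hp
  · rintro ⟨φ, hφ, hφ_eq⟩ ⟨v, w⟩ hp
    obtain ⟨rfl, rfl⟩ := Prod.mk.inj hφ_eq
    have sum_eq_zero : φ (v, 0) + φ (0, w) = 0 := by
      simpa [← map_add] using (mem_dualAnnihilator φ).mp hφ (v, w) hp
    simpa using eq_neg_of_add_eq_zero_left sum_eq_zero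

theorem relDom_relDual (P : Submodule ℂ (V × W)) :
    relDom (relDual P) = (relKer P).dualAnnihilator := by
  rw [relDom, relDual_eq_map_dualAnnihilator, ← map_comp, LinearMap.fst_prod, relKer,
    dualAnnihilator_comap]

theorem relIm_relDual (P : Submodule ℂ (V × W)) :
    relIm (relDual P) = (relIndef P).dualAnnihilator := by
  rw [relIm, relDual_eq_map_dualAnnihilator, ← map_comp, LinearMap.snd_prod, Submodule.map_neg,
    relIndef, dualAnnihilator_comap]

theorem relKer_inf_relIndef_relDual (P : Submodule ℂ (V × W)) (Q : Submodule ℂ (W × Y)) :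
    relKer (relDual Q) ⊓ relIndef (relDual P) = (relIm P ⊔ relDom Q).dualAnnihilator := by
  rw [relKer_relDual, relIndef_relDual, dualAnnihilator_sup_eq, inf_comm]

theorem relIm_sup_relDom_relDual (P : Submodule ℂ (V × W)) (Q : Submodule ℂ (W × Y)) :
    relIm (relDual P) ⊔ relDom (relDual Q) = (relKer Q ⊓ relIndef P).dualAnnihilator := by
  rw [relIm_relDual, relDom_relDual, Subspace.dualAnnihilator_inf_eq, sup_comm]

theorem composable_iff_dual_composable_general
    (P : Submodule ℂ (V × W)) (Q : Submodule ℂ (W × Y)) :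
    Composable P Q ↔ Composable (relDual P) (relDual Q) := by
  rw [Composable, Composable, relKer_inf_relIndef_relDual, relIm_sup_relDom_relDual,
    dualAnnihilator_eq_bot_iff, dualAnnihilator_eq_top_iff, and_comm]

end

/-- **Lemma 4.2(d).** The pair `(P, Q)` of linear relations between finite-dimensional
complex vector spaces is composable if and only if the pair of dual relations `(P', Q')`
is composable. -/
theorem composable_iff_dual_composable {V W Y : Type*}
    [AddCommGroup V] [Module ℂ V] [FiniteDimensional ℂ V]
    [AddCommGroup W] [Module ℂ W] [FiniteDimensional ℂ W]
    [AddCommGroup Y] [Module ℂ Y] [FiniteDimensional ℂ Y]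
    (P : Submodule ℂ (V × W)) (Q : Submodule ℂ (W × Y)) :
    Composable P Q ↔ Composable (relDual P) (relDual Q) :=
  composable_iff_dual_composable_general P Q
end

section
/- Let P : V ⇉ W and Q : W ⇉ Y be linear relations between finite-dimensional complex vector spaces such that the pair (P,Q) is composable. Then the dual of the composition equals the composition of the duals: (Q∘P)′ = Q′∘P′ as subspaces of V* × Y*. (Lemma 4.2(e).) -/
open Submodule Module

/-!
A pair `(f, k)` lies in `Q' ∘ P'` when some functional `g` on `W` pulls back to `f` along `P` and to
`k` along `Q`. Such a `g` is determined on the differences `w - w'` with `(v, w) ∈ P` and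
`(w', y) ∈ Q`, where it must take the value `f v - k y`. This prescription is consistent exactly
when it vanishes for `w = w'`, which says that `(f, k)` lies in `(Q ∘ P)'`; a functional on a
subspace of `W` extends to `W`.
-/

section DivisionRing

variable {K A B W Z : Type*} [DivisionRing K] [AddCommGroup A] [Module K A]
  [AddCommGroup B] [Module K B] [AddCommGroup W] [Module K W] [AddCommGroup Z] [Module K Z]

theorem exists_comp_eq_of_ker_le_ker {φ : A →ₗ[K] W} {f : A →ₗ[K] Z} (h : φ.ker ≤ f.ker) :
    ∃ g : W →ₗ[K] Z, g ∘ₗ φ = f := by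
  obtain ⟨r, hr⟩ := (φ.ker.liftQ φ le_rfl).exists_leftInverse_of_injective
    (φ.ker.ker_liftQ_eq_bot φ le_rfl le_rfl)
  refine ⟨φ.ker.liftQ f h ∘ₗ r, LinearMap.ext fun x ↦ ?_⟩
  have hx : r (φ x) = φ.ker.mkQ x := LinearMap.congr_fun hr (φ.ker.mkQ x)
  simp [hx]

theorem exists_comp_eq_and_comp_eq {a : A →ₗ[K] W} {b : B →ₗ[K] W} {f : A →ₗ[K] Z}
    {k : B →ₗ[K] Z} (h : ∀ x y, a x = b y → f x = k y) :
    ∃ g : W →ₗ[K] Z, g ∘ₗ a = f ∧ g ∘ₗ b = k := by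
  have hker : (a.coprod (-b)).ker ≤ (f.coprod (-k)).ker := by
    rintro ⟨x, y⟩ hxy
    have hab : a x = b y := by simpa [add_neg_eq_zero] using hxy
    simp [h x y hab]
  obtain ⟨g, hg⟩ := exists_comp_eq_of_ker_le_ker hker
  refine ⟨g, LinearMap.ext fun x ↦ ?_, LinearMap.ext fun y ↦ ?_⟩
  · simpa using LinearMap.congr_fun hg (x, 0)
  · simpa using LinearMap.congr_fun hg (0, y)

end DivisionRing

section LinearRelation

variable {V W Y : Type*} [AddCommGroup V] [Module ℂ V] [AddCommGroup W] [Module ℂ W]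
  [AddCommGroup Y] [Module ℂ Y] (P : Submodule ℂ (V × W)) (Q : Submodule ℂ (W × Y))

theorem relComp_relDual_le_relDual_relComp :
    relComp (relDual P) (relDual Q) ≤ relDual (relComp P Q) := by
  rintro ⟨f, k⟩ ⟨g, hfg, hgk⟩ ⟨v, y⟩ ⟨w, hvw, hwy⟩
  exact (hfg (v, w) hvw).trans (hgk (w, y) hwy)

theorem relDual_relComp_le_relComp_relDual :
    relDual (relComp P Q) ≤ relComp (relDual P) (relDual Q) := by
  rintro ⟨f, k⟩ hfk
  obtain ⟨g, hgP, hgQ⟩ : ∃ g : Dual ℂ W,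
      g ∘ₗ LinearMap.snd ℂ V W ∘ₗ P.subtype = f ∘ₗ LinearMap.fst ℂ V W ∘ₗ P.subtype ∧
      g ∘ₗ LinearMap.fst ℂ W Y ∘ₗ Q.subtype = k ∘ₗ LinearMap.snd ℂ W Y ∘ₗ Q.subtype := by
    refine exists_comp_eq_and_comp_eq ?_
    rintro ⟨⟨v, w⟩, hvw⟩ ⟨⟨w', y⟩, hwy⟩ (rfl : w = w')
    exact hfk (v, y) ⟨w, hvw, hwy⟩
  exact ⟨g, fun p hp ↦ (LinearMap.congr_fun hgP ⟨p, hp⟩).symm,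
    fun q hq ↦ LinearMap.congr_fun hgQ ⟨q, hq⟩⟩

theorem relDual_relComp_general :
    relDual (relComp P Q) = relComp (relDual P) (relDual Q) :=
  (relDual_relComp_le_relComp_relDual P Q).antisymm (relComp_relDual_le_relDual_relComp P Q)

end LinearRelation

/-- **Lemma 4.2(e).** If the pair `(P, Q)` of linear relations between finite-dimensional
complex vector spaces is composable, then the dual of the composition equals the
composition of the duals: `(Q∘P)' = Q'∘P'` as subspaces of `V* × Y*`. -/
theorem relDual_relComp {V W Y : Type*}
    [AddCommGroup V] [Module ℂ V] [FiniteDimensional ℂ V]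
    [AddCommGroup W] [Module ℂ W] [FiniteDimensional ℂ W]
    [AddCommGroup Y] [Module ℂ Y] [FiniteDimensional ℂ Y]
    (P : Submodule ℂ (V × W)) (Q : Submodule ℂ (W × Y))
    (h : Composable P Q) :
    relDual (relComp P Q) = relComp (relDual P) (relDual Q) :=
  relDual_relComp_general P Q
end

section
/- Let P : V ⇉ W, Q : W ⇉ Y, and R : Y ⇉ Z be linear relations between finite-dimensional complex vector spaces. Then [(P,Q) is composable and (Q∘P, R) is composable] if and only if [(Q,R) is composable and (P, R∘Q) is composable]; moreover, when these equivalent conditions hold, R∘(Q∘P) = (R∘Q)∘P. (Lemma 4.3: multiplication of morphisms of the category CK GA is associative.) -/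
open Submodule Module

/-!
An element of `Ker (R∘Q) ∩ Indef P` is related by `Q` to some `y ∈ Ker R ∩ Indef (Q∘P)`, so
composability of `(Q∘P, R)` forces `y = 0` and places the element in `Ker Q`. If instead
`w ∈ Dom Q` is related to `y`, then subtracting from `w` an element of `Im P` corrects `y` to an
element of `Dom R`. This gives one implication; the other is the same statement for the converse
relations, as passing to converses exchanges kernel with indefiniteness and domain with image.
-/

section LinearRelation

variable {V W Y Z : Type*}
  [AddCommGroup V] [Module ℂ V] [AddCommGroup W] [Module ℂ W]
  [AddCommGroup Y] [Module ℂ Y] [AddCommGroup Z] [Module ℂ Z]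
  {P : Submodule ℂ (V × W)} {Q : Submodule ℂ (W × Y)} {R : Submodule ℂ (Y × Z)}

theorem mem_relKer {v : V} : v ∈ relKer P ↔ (v, 0) ∈ P := Iff.rfl

theorem mem_relIndef {w : W} : w ∈ relIndef P ↔ (0, w) ∈ P := Iff.rfl

theorem mem_relDom {v : V} : v ∈ relDom P ↔ ∃ w, (v, w) ∈ P := by
  simp [relDom]

theorem mem_relIm {w : W} : w ∈ relIm P ↔ ∃ v, (v, w) ∈ P := by
  simp [relIm]

theorem mem_relComp {v : V} {y : Y} :
    (v, y) ∈ relComp P Q ↔ ∃ w, (v, w) ∈ P ∧ (w, y) ∈ Q := Iff.rfl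

theorem composable_iff_disjoint_codisjoint :
    Composable P Q ↔
      Disjoint (relKer Q) (relIndef P) ∧ Codisjoint (relIm P) (relDom Q) := by
  rw [disjoint_iff, codisjoint_iff, Composable]

theorem relComp_relComp (P : Submodule ℂ (V × W)) (Q : Submodule ℂ (W × Y))
    (R : Submodule ℂ (Y × Z)) :
    relComp (relComp P Q) R = relComp P (relComp Q R) := by
  ext ⟨v, z⟩
  simp only [mem_relComp]
  tauto

theorem relIndef_le_relIndef_relComp (P : Submodule ℂ (V × W)) (Q : Submodule ℂ (W × Y)) :
    relIndef Q ≤ relIndef (relComp P Q) :=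
  fun _ hy => ⟨0, P.zero_mem, hy⟩

theorem relIm_relComp_le (P : Submodule ℂ (V × W)) (Q : Submodule ℂ (W × Y)) :
    relIm (relComp P Q) ≤ relIm Q := by
  intro y hy
  obtain ⟨v, w, -, hwy⟩ := mem_relIm.1 hy
  exact mem_relIm.2 ⟨w, hwy⟩

theorem relKer_relComp_inf_relIndef_le
    (h : Disjoint (relKer R) (relIndef (relComp P Q))) :
    relKer (relComp Q R) ⊓ relIndef P ≤ relKer Q := by
  rintro w ⟨⟨y, hwy, hy⟩, hw⟩
  have hy_zero : y = 0 := disjoint_def.1 h y hy (mem_relIndef.2 ⟨w, hw, hwy⟩)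
  exact mem_relKer.2 (hy_zero ▸ hwy)

theorem relDom_le_relIm_sup_relDom_relComp
    (h : Codisjoint (relIm (relComp P Q)) (relDom R)) :
    relDom Q ≤ relIm P ⊔ relDom (relComp Q R) := by
  intro w hw
  obtain ⟨y, hwy⟩ := mem_relDom.1 hw
  obtain ⟨y₁, y₂, hy₁, hy₂, rfl⟩ := codisjoint_iff_exists_add_eq.1 h y
  obtain ⟨v, w₁, hvw₁, hwy₁⟩ := mem_relIm.1 hy₁
  obtain ⟨z, hyz⟩ := mem_relDom.1 hy₂
  have hsub : (w - w₁, y₂) ∈ Q := by simpa using Q.sub_mem hwy hwy₁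
  exact mem_sup.2 ⟨w₁, mem_relIm.2 ⟨v, hvw₁⟩, w - w₁, mem_relDom.2 ⟨z, y₂, hsub, hyz⟩,
    add_sub_cancel w₁ w⟩

theorem Composable.of_relComp_left (h : Composable (relComp P Q) R) : Composable Q R := by
  rw [composable_iff_disjoint_codisjoint] at h ⊢
  exact ⟨h.1.mono_right (relIndef_le_relIndef_relComp P Q),
    h.2.mono_left (relIm_relComp_le P Q)⟩

theorem Composable.relComp_right (hPQ : Composable P Q) (hR : Composable (relComp P Q) R) :
    Composable P (relComp Q R) := by
  rw [composable_iff_disjoint_codisjoint] at hPQ hR ⊢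
  constructor
  · exact disjoint_iff_inf_le.2 <|
      (le_inf (relKer_relComp_inf_relIndef_le hR.1) inf_le_right).trans hPQ.1.le_bot
  · exact codisjoint_iff_le_sup.2 <|
      hPQ.2.top_le.trans (sup_le le_sup_left (relDom_le_relIm_sup_relDom_relComp hR.2))

/-- The converse relation `W ⇉ V` of a linear relation `P : V ⇉ W`, consisting of the pairs
`(w, v)` with `(v, w) ∈ P`. It reverses compositions, so it exchanges the two bracketings of a
triple composition. -/
def relConverse (P : Submodule ℂ (V × W)) : Submodule ℂ (W × V) :=
  P.comap (LinearEquiv.prodComm ℂ W V).toLinearMap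

theorem mem_relConverse {v : V} {w : W} : (w, v) ∈ relConverse P ↔ (v, w) ∈ P := Iff.rfl

theorem relKer_relConverse (P : Submodule ℂ (V × W)) : relKer (relConverse P) = relIndef P := rfl

theorem relIndef_relConverse (P : Submodule ℂ (V × W)) : relIndef (relConverse P) = relKer P := rfl

theorem relDom_relConverse (P : Submodule ℂ (V × W)) : relDom (relConverse P) = relIm P := by
  ext w
  simp only [mem_relDom, mem_relIm, mem_relConverse]

theorem relIm_relConverse (P : Submodule ℂ (V × W)) : relIm (relConverse P) = relDom P := by
  ext v
  simp only [mem_relDom, mem_relIm, mem_relConverse]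

theorem relConverse_relComp (P : Submodule ℂ (V × W)) (Q : Submodule ℂ (W × Y)) :
    relConverse (relComp P Q) = relComp (relConverse Q) (relConverse P) := by
  ext ⟨y, v⟩
  simp only [mem_relConverse, mem_relComp, and_comm]

theorem composable_relConverse_iff :
    Composable (relConverse Q) (relConverse P) ↔ Composable P Q := by
  simp only [Composable, relKer_relConverse, relIndef_relConverse, relDom_relConverse,
    relIm_relConverse, inf_comm, sup_comm]

theorem Composable.of_relComp_right (h : Composable P (relComp Q R)) : Composable P Q := by
  rw [← composable_relConverse_iff, relConverse_relComp] at h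
  exact composable_relConverse_iff.1 h.of_relComp_left

theorem Composable.relComp_left (hQR : Composable Q R) (hP : Composable P (relComp Q R)) :
    Composable (relComp P Q) R := by
  rw [← composable_relConverse_iff, relConverse_relComp] at hP ⊢
  exact (composable_relConverse_iff.2 hQR).relComp_right hP

theorem relComp_assoc_general (P : Submodule ℂ (V × W)) (Q : Submodule ℂ (W × Y))
    (R : Submodule ℂ (Y × Z)) :
    ((Composable P Q ∧ Composable (relComp P Q) R) ↔
      (Composable Q R ∧ Composable P (relComp Q R))) ∧
    relComp (relComp P Q) R = relComp P (relComp Q R) :=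
  ⟨⟨fun ⟨hPQ, hR⟩ => ⟨hR.of_relComp_left, hPQ.relComp_right hR⟩,
    fun ⟨hQR, hP⟩ => ⟨hP.of_relComp_right, hQR.relComp_left hP⟩⟩,
    relComp_relComp P Q R⟩

end LinearRelation

/-- **Lemma 4.3** (associativity of the multiplication of morphisms in the category CK GA).
For linear relations `P : V ⇉ W`, `Q : W ⇉ Y`, `R : Y ⇉ Z` between finite-dimensional
complex vector spaces: `(P,Q)` and `(Q∘P, R)` are composable iff `(Q,R)` and `(P, R∘Q)` are
composable, and when these equivalent conditions hold `R∘(Q∘P) = (R∘Q)∘P`. -/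
theorem relComp_assoc {V W Y Z : Type*}
    [AddCommGroup V] [Module ℂ V] [FiniteDimensional ℂ V]
    [AddCommGroup W] [Module ℂ W] [FiniteDimensional ℂ W]
    [AddCommGroup Y] [Module ℂ Y] [FiniteDimensional ℂ Y]
    [AddCommGroup Z] [Module ℂ Z] [FiniteDimensional ℂ Z]
    (P : Submodule ℂ (V × W)) (Q : Submodule ℂ (W × Y)) (R : Submodule ℂ (Y × Z)) :
    ((Composable P Q ∧ Composable (relComp P Q) R) ↔
      (Composable Q R ∧ Composable P (relComp Q R))) ∧
    ((Composable P Q ∧ Composable (relComp P Q) R) →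
      relComp (relComp P Q) R = relComp P (relComp Q R)) :=
  (relComp_assoc_general P Q R).imp_right fun h _ => h
end
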